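/- Let W ⊆ ℝ^p be open and let g: W → Matrix n n ℂ be a smooth map such that g(x) is invertible for every x ∈ W. Then the Wess–Zumino 3-form WZ_g = (1/3)·tr(θ_g ∧ θ_g ∧ θ_g), where θ_g = g⁻¹·dg, is closed: d(WZ_g) = 0. -/

import Mathlib

/-!
STATEMENT 6: The Wess–Zumino 3-form WZ_g = (1/3)·tr(θ_g ∧ θ_g ∧ θ_g) is closed,
where θ_g = g⁻¹·dg for a smooth map g : W → Matrix n n ℂ with invertible
values on an open set W ⊆ ℝ^p.  The exterior derivative of a 3-form ω is
(dω)(x)(v₀,…,v₃) = Σᵢ (−1)ⁱ D_{vᵢ}(y ↦ ω(y)(v₀,…,v̂ᵢ,…,v₃))(x).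
-/

attribute [local instance] Matrix.normedAddCommGroup Matrix.normedSpace

/-- The Maurer–Cartan form `θ_g(x)(v) = (g x)⁻¹ · (D_v g)(x)` of a matrix-valued map. -/
noncomputable def mcForm {p n : ℕ}
    (g : (Fin p → ℝ) → Matrix (Fin n) (Fin n) ℂ)
    (x v : Fin p → ℝ) : Matrix (Fin n) (Fin n) ℂ :=
  (g x)⁻¹ * fderiv ℝ g x v

/-- The Wess–Zumino 3-form `WZ_g = (1/3)·tr(θ_g ∧ θ_g ∧ θ_g)`; the triple wedge of a
matrix-valued 1-form with itself, evaluated at (w 0, w 1, w 2), is the signed sum over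
all permutations of the products of values. -/
noncomputable def wzForm {p n : ℕ}
    (g : (Fin p → ℝ) → Matrix (Fin n) (Fin n) ℂ)
    (x : Fin p → ℝ) (w : Fin 3 → (Fin p → ℝ)) : ℂ :=
  (1 / 3 : ℂ) * ∑ σ : Equiv.Perm (Fin 3),
    ((Equiv.Perm.sign σ : ℤ) : ℂ) *
      (mcForm g x (w (σ 0)) * mcForm g x (w (σ 1)) * mcForm g x (w (σ 2))).trace

/-- The Leibniz rule for products of matrix-valued maps, with the derivatives evaluated
on a direction. -/
theorem differentiableAt_matrix_mul {E : Type*} [NormedAddCommGroup E] [NormedSpace ℝ E] {n : ℕ}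
    {A B : E → Matrix (Fin n) (Fin n) ℂ} {x : E}
    (hA : DifferentiableAt ℝ A x) (hB : DifferentiableAt ℝ B x) :
    DifferentiableAt ℝ (fun y => A y * B y) x ∧
      ∀ v, fderiv ℝ (fun y => A y * B y) x v = A x * fderiv ℝ B x v + fderiv ℝ A x v * B x := by
  have h := (LinearMap.mul ℝ
    (Matrix (Fin n) (Fin n) ℂ)).toContinuousBilinearMap.hasFDerivAt_of_bilinear
      hA.hasFDerivAt hB.hasFDerivAt
  refine ⟨h.differentiableAt, fun v => ?_⟩
  exact congrArg (fun L => L v) h.fderiv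

theorem differentiableAt_matrix_iff {E : Type*} [NormedAddCommGroup E] [NormedSpace ℝ E] {n : ℕ}
    {A : E → Matrix (Fin n) (Fin n) ℂ} {x : E} :
    DifferentiableAt ℝ A x ↔ ∀ i j, DifferentiableAt ℝ (fun y => A y i j) x := by
  refine (differentiableAt_pi (𝕜 := ℝ) (Φ := A)).trans (forall_congr' fun i => ?_)
  exact differentiableAt_pi (𝕜 := ℝ) (Φ := fun y => A y i)

theorem DifferentiableAt.matrix_det {E : Type*} [NormedAddCommGroup E] [NormedSpace ℝ E] {n : ℕ}
    {A : E → Matrix (Fin n) (Fin n) ℂ} {x : E} (hA : DifferentiableAt ℝ A x) :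
    DifferentiableAt ℝ (fun y => (A y).det) x := by
  have hA' := differentiableAt_matrix_iff.1 hA
  simp only [Matrix.det_apply']
  fun_prop

theorem DifferentiableAt.matrix_inv {E : Type*} [NormedAddCommGroup E] [NormedSpace ℝ E] {n : ℕ}
    {A : E → Matrix (Fin n) (Fin n) ℂ} {x : E} (hA : DifferentiableAt ℝ A x)
    (hx : IsUnit (A x)) : DifferentiableAt ℝ (fun y => (A y)⁻¹) x := by
  have hdet : (A x).det ≠ 0 := ((Matrix.isUnit_iff_isUnit_det _).1 hx).ne_zero
  refine differentiableAt_matrix_iff.2 fun i j => ?_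
  simp only [Matrix.inv_def, Ring.inverse_eq_inv', Matrix.smul_apply, smul_eq_mul,
    Matrix.adjugate_apply]
  refine (hA.matrix_det.inv hdet).mul (DifferentiableAt.matrix_det ?_)
  refine differentiableAt_matrix_iff.2 fun k l => ?_
  have hA' := differentiableAt_matrix_iff.1 hA
  by_cases hk : k = j
  · subst hk
    simp
  · simpa [Matrix.updateRow_ne hk] using hA' k l

/-- The derivative of the inverse: `D_v (A⁻¹) = -A⁻¹ · D_v A · A⁻¹`. -/
theorem fderiv_matrix_inv {E : Type*} [NormedAddCommGroup E] [NormedSpace ℝ E] {n : ℕ}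
    {A : E → Matrix (Fin n) (Fin n) ℂ} {x : E} (hA : DifferentiableAt ℝ A x)
    (hU : ∀ᶠ y in nhds x, IsUnit (A y)) (v : E) :
    fderiv ℝ (fun y => (A y)⁻¹) x v = -((A x)⁻¹ * fderiv ℝ A x v * (A x)⁻¹) := by
  have hx := (Matrix.isUnit_iff_isUnit_det _).1 hU.self_of_nhds
  have hmul := (differentiableAt_matrix_mul (hA.matrix_inv hU.self_of_nhds) hA).2 v
  have hone : (fun y => (A y)⁻¹ * A y) =ᶠ[nhds x] fun _ => 1 := by
    filter_upwards [hU] with y hy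
    exact Matrix.nonsing_inv_mul _ ((Matrix.isUnit_iff_isUnit_det _).1 hy)
  rw [hone.fderiv_eq] at hmul
  simp only [fderiv_fun_const, Pi.zero_apply, zero_apply] at hmul
  have h := eq_neg_of_add_eq_zero_right hmul.symm
  calc fderiv ℝ (fun y => (A y)⁻¹) x v
      = fderiv ℝ (fun y => (A y)⁻¹) x v * A x * (A x)⁻¹ := by
        rw [Matrix.mul_assoc, Matrix.mul_nonsing_inv _ hx, Matrix.mul_one]
    _ = -((A x)⁻¹ * fderiv ℝ A x v * (A x)⁻¹) := by rw [h, Matrix.neg_mul]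

/-- The structure equation of the Maurer–Cartan form, before antisymmetrization:
`D_w θ(u) = g⁻¹ · D²g(w, u) - θ(w) · θ(u)`. -/
theorem differentiableAt_mcForm {p n : ℕ} {g : (Fin p → ℝ) → Matrix (Fin n) (Fin n) ℂ}
    {x : Fin p → ℝ} (hg : ContDiffAt ℝ 2 g x) (hU : ∀ᶠ y in nhds x, IsUnit (g y))
    (u : Fin p → ℝ) :
    DifferentiableAt ℝ (fun y => mcForm g y u) x ∧
      ∀ w, fderiv ℝ (fun y => mcForm g y u) x w =
        (g x)⁻¹ * fderiv ℝ (fderiv ℝ g) x w u - mcForm g x w * mcForm g x u := by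
  have hg1 : DifferentiableAt ℝ g x := hg.differentiableAt (by norm_num)
  have hg2 : DifferentiableAt ℝ (fderiv ℝ g) x :=
    (hg.fderiv_right (m := 1) (by norm_num)).differentiableAt (by norm_num)
  have hg3 := (ContinuousLinearMap.apply ℝ (Matrix (Fin n) (Fin n) ℂ) u).hasFDerivAt.comp x
    hg2.hasFDerivAt
  have hg4 : ∀ w, fderiv ℝ (fun y => fderiv ℝ g y u) x w = fderiv ℝ (fderiv ℝ g) x w u :=
    fun w => congrArg (fun L => L w) hg3.fderiv
  obtain ⟨hd, hf⟩ := differentiableAt_matrix_mul (B := fun y => fderiv ℝ g y u)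
    (hg1.matrix_inv hU.self_of_nhds) hg3.differentiableAt
  refine ⟨hd, fun w => (hf w).trans ?_⟩
  rw [fderiv_matrix_inv hg1 hU, hg4]
  simp [mcForm, Matrix.mul_assoc, sub_eq_add_neg]

theorem trace_mul_rotate_three {n : ℕ} (A B C : Matrix (Fin n) (Fin n) ℂ) :
    (A * B * C).trace = (B * C * A).trace := by
  rw [Matrix.mul_assoc, Matrix.trace_mul_comm]

theorem trace_mul_rotate_four {n : ℕ} (A B C D : Matrix (Fin n) (Fin n) ℂ) :
    (A * B * C * D).trace = (B * C * D * A).trace := by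
  rw [Matrix.mul_assoc, Matrix.mul_assoc, Matrix.trace_mul_comm, ← Matrix.mul_assoc B]

/-- By cyclicity of the trace, only the two cyclic orders contribute to `WZ_g`. -/
theorem wzForm_eq {p n : ℕ} (g : (Fin p → ℝ) → Matrix (Fin n) (Fin n) ℂ)
    (x : Fin p → ℝ) (w : Fin 3 → (Fin p → ℝ)) :
    wzForm g x w =
      (mcForm g x (w 0) * mcForm g x (w 1) * mcForm g x (w 2)).trace -
        (mcForm g x (w 0) * mcForm g x (w 2) * mcForm g x (w 1)).trace := by
  have huniv : (Finset.univ : Finset (Equiv.Perm (Fin 3))) =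
      {1, Equiv.swap 0 1, Equiv.swap 0 2, Equiv.swap 1 2,
        Equiv.swap 0 1 * Equiv.swap 1 2, Equiv.swap 1 2 * Equiv.swap 0 1} := by decide
  have e1 : Equiv.swap (0 : Fin 3) 1 2 = 2 := by decide
  have e2 : Equiv.swap (0 : Fin 3) 2 1 = 1 := by decide
  have e3 : Equiv.swap (1 : Fin 3) 2 0 = 0 := by decide
  rw [wzForm, huniv]
  repeat rw [Finset.sum_insert (by decide)]
  rw [Finset.sum_singleton]
  simp only [Equiv.Perm.sign_one, Equiv.Perm.sign_mul, Equiv.Perm.coe_one, Equiv.Perm.coe_mul]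
  simp [e1, e2, e3, trace_mul_rotate_three (mcForm g x (w 1)) (mcForm g x (w 0)),
    trace_mul_rotate_three (mcForm g x (w 1)) (mcForm g x (w 2)),
    trace_mul_rotate_three (mcForm g x (w 2)) (mcForm g x (w 0)),
    trace_mul_rotate_three (mcForm g x (w 2)) (mcForm g x (w 1))]
  ring

/-- The derivative of `WZ_g` in terms of the Maurer–Cartan form and its derivatives. -/
theorem fderiv_wzForm {p n : ℕ} {g : (Fin p → ℝ) → Matrix (Fin n) (Fin n) ℂ}
    {x : Fin p → ℝ} (w : Fin 3 → (Fin p → ℝ))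
    (hd : ∀ u, DifferentiableAt ℝ (fun y => mcForm g y u) x) (v : Fin p → ℝ) :
    fderiv ℝ (fun y => wzForm g y w) x v =
      (fderiv ℝ (fun y => mcForm g y (w 0)) x v * mcForm g x (w 1) * mcForm g x (w 2)).trace +
      (mcForm g x (w 0) * fderiv ℝ (fun y => mcForm g y (w 1)) x v * mcForm g x (w 2)).trace +
      (mcForm g x (w 0) * mcForm g x (w 1) * fderiv ℝ (fun y => mcForm g y (w 2)) x v).trace -
      ((fderiv ℝ (fun y => mcForm g y (w 0)) x v * mcForm g x (w 2) * mcForm g x (w 1)).trace +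
      (mcForm g x (w 0) * fderiv ℝ (fun y => mcForm g y (w 2)) x v * mcForm g x (w 1)).trace +
      (mcForm g x (w 0) * mcForm g x (w 2) * fderiv ℝ (fun y => mcForm g y (w 1)) x v).trace) := by
  have htrace : ∀ a b c, HasFDerivAt
      (fun y => (mcForm g y a * mcForm g y b * mcForm g y c).trace)
      ((Matrix.traceLinearMap (Fin n) ℝ ℂ).toContinuousLinearMap.comp
        (fderiv ℝ (fun y => mcForm g y a * mcForm g y b * mcForm g y c) x)) x := fun a b c =>
    (Matrix.traceLinearMap (Fin n) ℝ ℂ).toContinuousLinearMap.hasFDerivAt.comp x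
      (differentiableAt_matrix_mul (differentiableAt_matrix_mul (hd a) (hd b)).1
        (hd c)).1.hasFDerivAt
  have hmul : ∀ a b c, fderiv ℝ (fun y => mcForm g y a * mcForm g y b * mcForm g y c) x v =
      fderiv ℝ (fun y => mcForm g y a) x v * mcForm g x b * mcForm g x c +
      mcForm g x a * fderiv ℝ (fun y => mcForm g y b) x v * mcForm g x c +
      mcForm g x a * mcForm g x b * fderiv ℝ (fun y => mcForm g y c) x v := fun a b c => by
    rw [(differentiableAt_matrix_mul (differentiableAt_matrix_mul (hd a) (hd b)).1 (hd c)).2,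
      (differentiableAt_matrix_mul (hd a) (hd b)).2, Matrix.add_mul]
    abel
  simp only [wzForm_eq]
  rw [((htrace _ _ _).fun_sub (htrace _ _ _)).fderiv]
  simp [hmul, Matrix.trace_add]

theorem wz_form_closed {p n : ℕ} (hp : 0 < p) (hn : 0 < n)
    {W : Set (Fin p → ℝ)} (hW : IsOpen W)
    (g : (Fin p → ℝ) → Matrix (Fin n) (Fin n) ℂ)
    (hg : ContDiffOn ℝ (⊤ : ℕ∞) g W)
    (hginv : ∀ x ∈ W, IsUnit (g x)) :
    ∀ x ∈ W, ∀ v : Fin 4 → (Fin p → ℝ),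
      ∑ i : Fin 4, (-1 : ℂ) ^ (i : ℕ) *
        fderiv ℝ (fun y => wzForm g y (fun j => v (i.succAbove j))) x (v i) = 0 := by
  intro x hx v
  have hWx : W ∈ nhds x := hW.mem_nhds hx
  have hgx : ContDiffAt ℝ 2 g x :=
    (hg.contDiffAt hWx).of_le (WithTop.coe_le_coe.2 (le_top : (2 : ℕ∞) ≤ ⊤))
  have hU : ∀ᶠ y in nhds x, IsUnit (g y) := Filter.eventually_of_mem hWx hginv
  have hsymm : ∀ u w, fderiv ℝ (fderiv ℝ g) x u w = fderiv ℝ (fderiv ℝ g) x w u :=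
    fun u w => (hgx.isSymmSndFDerivAt (by simp)).eq u w
  have hmc := differentiableAt_mcForm hgx hU
  simp only [fderiv_wzForm _ (fun u => (hmc u).1), (hmc _).2, Fin.sum_univ_four]
  simp only [show (0 : Fin 4).succAbove (0 : Fin 3) = 1 from rfl,
    show (0 : Fin 4).succAbove (1 : Fin 3) = 2 from rfl,
    show (0 : Fin 4).succAbove (2 : Fin 3) = 3 from rfl,
    show (1 : Fin 4).succAbove (0 : Fin 3) = 0 from rfl,
    show (1 : Fin 4).succAbove (1 : Fin 3) = 2 from rfl,
    show (1 : Fin 4).succAbove (2 : Fin 3) = 3 from rfl,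
    show (2 : Fin 4).succAbove (0 : Fin 3) = 0 from rfl,
    show (2 : Fin 4).succAbove (1 : Fin 3) = 1 from rfl,
    show (2 : Fin 4).succAbove (2 : Fin 3) = 3 from rfl,
    show (3 : Fin 4).succAbove (0 : Fin 3) = 0 from rfl,
    show (3 : Fin 4).succAbove (1 : Fin 3) = 1 from rfl,
    show (3 : Fin 4).succAbove (2 : Fin 3) = 2 from rfl]
  rw [hsymm (v 1) (v 0), hsymm (v 2) (v 0), hsymm (v 3) (v 0), hsymm (v 2) (v 1),
    hsymm (v 3) (v 1), hsymm (v 3) (v 2)]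
  generalize mcForm g x (v 0) = a
  generalize mcForm g x (v 1) = b
  generalize mcForm g x (v 2) = c
  generalize mcForm g x (v 3) = d
  generalize (g x)⁻¹ * _ = S01
  generalize (g x)⁻¹ * _ = S02
  generalize (g x)⁻¹ * _ = S03
  generalize (g x)⁻¹ * _ = S12
  generalize (g x)⁻¹ * _ = S13
  generalize (g x)⁻¹ * _ = S23
  simp only [Matrix.sub_mul, Matrix.mul_sub, Matrix.trace_sub, ← Matrix.mul_assoc,
    trace_mul_rotate_three a, trace_mul_rotate_three b, trace_mul_rotate_three c,
    trace_mul_rotate_three d, trace_mul_rotate_four b, trace_mul_rotate_four c,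
    trace_mul_rotate_four d]
  simp
  ring
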